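/- Let q ≥ 3 be a prime and let p be the prime immediately preceding q. Then S(q) < 2.13·√p, where S(q) = Σ_{α=2}^{⌊log(2q)/log 2⌋} θ(q^{1/α} + 1). -/

import Mathlib

/-- Chebyshev's function θ(x) = Σ_{p ≤ x, p prime} log p. -/
noncomputable def chebTheta (x : ℝ) : ℝ :=
  ∑ p ∈ Finset.filter Nat.Prime (Finset.range (⌊x⌋₊ + 1)), Real.log p

/-- S(q) = Σ_{α=2}^{⌊log(2q)/log 2⌋} θ(q^{1/α} + 1). -/
noncomputable def Sfun (q : ℕ) : ℝ :=
  ∑ a ∈ Finset.Icc 2 ⌊Real.log (2 * q) / Real.log 2⌋₊,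
    chebTheta ((q : ℝ) ^ ((1 : ℝ) / a) + 1)

/-!
By Chebyshev's bound `θ x ≤ log 4 * x`, the sum `S(q)` is at most
`log 4 * (√q + q ^ (1/3) + ⋯)`, which is at most `1.072 * log 4 * √q` once `q ≥ 2 ^ 30`. Bertrand's
postulate gives `q ≤ 2 * p`, and `1.072 * log 4 * √2 < 2.13`.

For `q < 2 ^ 30` the lower-order terms are too large for this, but `S` is monotone. So it suffices
to exhibit primes `2 = a₀ < a₁ < ⋯` reaching past `2 ^ 30` with `S(aᵢ₊₁) < 2.13 * √aᵢ`: if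
`aᵢ < q ≤ aᵢ₊₁`, then `aᵢ ≤ p`. Each of these inequalities is a comparison of integers, because
`S(q)` is the logarithm of a product of primorials.
-/

open Finset
open scoped Chebyshev

theorem chebTheta_eq_theta : chebTheta = θ := by
  funext x
  rw [Chebyshev.theta_eq_sum_primesLE]
  rfl

theorem floor_rpow_one_div (q : ℕ) {α : ℕ} (hα : α ≠ 0) :
    ⌊(q : ℝ) ^ ((1 : ℝ) / α)⌋₊ = Nat.nthRoot α q := by
  refine eq_of_forall_le_iff fun n ↦ ?_
  rw [Nat.le_floor_iff (by positivity), Nat.le_nthRoot_iff hα, one_div,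
    Real.le_rpow_inv_iff_of_pos (by positivity) (by positivity) (by positivity),
    Real.rpow_natCast]
  norm_cast

theorem Sfun_eq_sum_theta (q : ℕ) :
    Sfun q = ∑ α ∈ Icc 2 (Nat.log 2 q + 1), θ ((q : ℝ) ^ ((1 : ℝ) / α) + 1) := by
  rcases eq_or_ne q 0 with rfl | hq
  · simp [Sfun]
  have hfloor : ⌊Real.log (2 * q) / Real.log 2⌋₊ = Nat.log 2 q + 1 := by
    rw [← Nat.log_mul_base one_lt_two hq, mul_comm q, ← Real.natFloor_logb_natCast, Real.logb]
    push_cast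
    rfl
  rw [Sfun, hfloor, chebTheta_eq_theta]

theorem Sfun_mono : Monotone Sfun := by
  intro q r hqr
  rw [Sfun_eq_sum_theta, Sfun_eq_sum_theta]
  calc ∑ α ∈ Icc 2 (Nat.log 2 q + 1), θ ((q : ℝ) ^ ((1 : ℝ) / α) + 1)
      ≤ ∑ α ∈ Icc 2 (Nat.log 2 q + 1), θ ((r : ℝ) ^ ((1 : ℝ) / α) + 1) :=
        sum_le_sum fun α _ ↦ Chebyshev.theta_mono (by gcongr)
    _ ≤ ∑ α ∈ Icc 2 (Nat.log 2 r + 1), θ ((r : ℝ) ^ ((1 : ℝ) / α) + 1) :=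
        sum_le_sum_of_subset_of_nonneg (Icc_subset_Icc_right (by gcongr))
          fun _ _ _ ↦ Chebyshev.theta_nonneg _

theorem Sfun_eq_log_prod_primorial (q : ℕ) :
    Sfun q = Real.log (∏ α ∈ Icc 2 (Nat.log 2 q + 1), primorial (Nat.nthRoot α q + 1) : ℕ) := by
  rw [Sfun_eq_sum_theta, Nat.cast_prod,
    Real.log_prod fun α _ ↦ Nat.cast_ne_zero.2 (primorial_ne_zero _)]
  refine sum_congr rfl fun α hα ↦ ?_
  have hα0 : α ≠ 0 := by grind
  rw [Chebyshev.theta_eq_log_primorial, Nat.floor_add_one (by positivity),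
    floor_rpow_one_div q hα0]

theorem log_four_lt : Real.log 4 < 1.3863 := by
  have hlog4 : Real.log 4 = 2 * Real.log 2 := by
    rw [show (4 : ℝ) = 2 ^ 2 by norm_num, Real.log_pow, Nat.cast_ofNat]
  linarith only [hlog4, Real.log_two_lt_d9]

theorem rpow_le_sqrt_div_two_pow {x e : ℝ} {m n : ℕ} (hx : 2 ^ m ≤ x) (he : e ≤ 1 / 2)
    (hn : n ≤ m * (1 / 2 - e)) : x ^ e ≤ √x / 2 ^ n := by
  have hx0 : 0 < x := lt_of_lt_of_le (by positivity) hx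
  have hpow : (2 : ℝ) ^ n ≤ x ^ (1 / 2 - e) :=
    calc (2 : ℝ) ^ n = 2 ^ (n : ℝ) := (Real.rpow_natCast _ _).symm
      _ ≤ 2 ^ (m * (1 / 2 - e)) := Real.rpow_le_rpow_of_exponent_le one_le_two hn
      _ = (2 ^ m) ^ (1 / 2 - e) := by rw [Real.rpow_mul zero_le_two, Real.rpow_natCast]
      _ ≤ x ^ (1 / 2 - e) := Real.rpow_le_rpow (by positivity) hx (by linarith)
  rw [le_div_iff₀ (by positivity)]
  calc x ^ e * 2 ^ n ≤ x ^ e * x ^ (1 / 2 - e) := by gcongr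
    _ = √x := by rw [← Real.rpow_add hx0, add_sub_cancel, Real.sqrt_eq_rpow]

theorem nat_log_two_le_mul_rpow {q : ℕ} (hq : 2 ^ 30 ≤ q) :
    Nat.log 2 q ≤ 30 / 1024 * (q : ℝ) ^ ((1 : ℝ) / 3) := by
  have hqR : (2 : ℝ) ^ 30 ≤ q := mod_cast hq
  have hexp : Real.exp (1 / 3)⁻¹ ≤ 2 ^ 30 :=
    calc Real.exp (1 / 3)⁻¹ = Real.exp 1 ^ 3 := by rw [← Real.exp_nat_mul]; norm_num
      _ ≤ 3 ^ 3 := by gcongr; exact Real.exp_one_lt_three.le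
      _ ≤ 2 ^ 30 := by norm_num
  have hcbrt : ((2 : ℝ) ^ 30) ^ ((1 : ℝ) / 3) = 1024 := by
    rw [← Real.rpow_natCast, ← Real.rpow_mul zero_le_two]
    norm_num
  have hanti := Real.log_div_self_rpow_antitoneOn (a := 1 / 3) (by norm_num) hexp
    (hexp.trans hqR) hqR
  simp only [hcbrt, Real.log_pow] at hanti
  have hq0 : (0 : ℝ) < q := lt_of_lt_of_le (by positivity) hqR
  rw [div_le_iff₀ (by positivity)] at hanti
  have hlog2 : 0 < Real.log 2 := Real.log_pos one_lt_two
  calc (Nat.log 2 q : ℝ) ≤ Real.logb 2 q := Real.natLog_le_logb q 2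
    _ ≤ 30 / 1024 * (q : ℝ) ^ ((1 : ℝ) / 3) := by
      rw [Real.logb, div_le_iff₀ hlog2]
      refine hanti.trans_eq ?_
      push_cast
      ring

theorem sum_rpow_one_div_le {x : ℝ} (hx : 1 ≤ x) {L : ℕ} (hL : 4 ≤ L) :
    ∑ α ∈ Icc 2 (L + 1), x ^ ((1 : ℝ) / α) ≤
      √x + x ^ ((1 : ℝ) / 3) + x ^ ((1 : ℝ) / 4) + x ^ ((1 : ℝ) / 5) +
        L * x ^ ((1 : ℝ) / 6) := by
  have hhead : ∑ α ∈ Ico 2 6, x ^ ((1 : ℝ) / (α : ℕ)) =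
      √x + x ^ ((1 : ℝ) / 3) + x ^ ((1 : ℝ) / 4) + x ^ ((1 : ℝ) / 5) := by
    simp [sum_Ico_succ_top, Real.sqrt_eq_rpow]
  have htail : ∑ α ∈ Ico 6 (L + 2), x ^ ((1 : ℝ) / (α : ℕ)) ≤ L * x ^ ((1 : ℝ) / 6) :=
    calc ∑ α ∈ Ico 6 (L + 2), x ^ ((1 : ℝ) / (α : ℕ))
        ≤ ∑ _α ∈ Ico 6 (L + 2), x ^ ((1 : ℝ) / 6) := by
          refine sum_le_sum fun α hα ↦ Real.rpow_le_rpow_of_exponent_le hx ?_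
          have hα6 : (6 : ℝ) ≤ α := mod_cast (mem_Ico.1 hα).1
          exact one_div_le_one_div_of_le (by norm_num) hα6
      _ = (L + 2 - 6 : ℕ) * x ^ ((1 : ℝ) / 6) := by
          rw [sum_const, Nat.card_Ico, nsmul_eq_mul]
      _ ≤ L * x ^ ((1 : ℝ) / 6) := by
          gcongr
          omega
  rw [← Ico_succ_right_eq_Icc, Order.succ_eq_add_one,
    ← sum_Ico_consecutive _ (by norm_num : 2 ≤ 6) (by omega), hhead]
  exact add_le_add_right htail _

theorem Sfun_le_log_four_mul_sum (q : ℕ) :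
    Sfun q ≤ Real.log 4 *
      (∑ α ∈ Icc 2 (Nat.log 2 q + 1), (q : ℝ) ^ ((1 : ℝ) / α) + Nat.log 2 q) :=
  calc Sfun q = ∑ α ∈ Icc 2 (Nat.log 2 q + 1), θ ((q : ℝ) ^ ((1 : ℝ) / α) + 1) :=
        Sfun_eq_sum_theta q
    _ ≤ ∑ α ∈ Icc 2 (Nat.log 2 q + 1), Real.log 4 * ((q : ℝ) ^ ((1 : ℝ) / α) + 1) :=
        sum_le_sum fun α _ ↦ Chebyshev.theta_le_log4_mul_x (by positivity)
    _ = Real.log 4 *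
        (∑ α ∈ Icc 2 (Nat.log 2 q + 1), (q : ℝ) ^ ((1 : ℝ) / α) + Nat.log 2 q) := by
        simp [← mul_sum, sum_add_distrib]

theorem Sfun_le_mul_sqrt {q : ℕ} (hq : 2 ^ 30 ≤ q) : Sfun q ≤ 1.072 * Real.log 4 * √q := by
  have hqR : (2 : ℝ) ^ 30 ≤ q := mod_cast hq
  have hq0 : (0 : ℝ) < q := lt_of_lt_of_le (by positivity) hqR
  have hL4 : 4 ≤ Nat.log 2 q := (Nat.le_log_iff_pow_le one_lt_two (by omega)).2 (by omega)
  have hsum := sum_rpow_one_div_le (hqR.trans' (by norm_num)) hL4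
  have h3 : (q : ℝ) ^ ((1 : ℝ) / 3) ≤ √q / 2 ^ 5 :=
    rpow_le_sqrt_div_two_pow hqR (by norm_num) (by norm_num)
  have h4 : (q : ℝ) ^ ((1 : ℝ) / 4) ≤ √q / 2 ^ 7 :=
    rpow_le_sqrt_div_two_pow hqR (by norm_num) (by norm_num)
  have h5 : (q : ℝ) ^ ((1 : ℝ) / 5) ≤ √q / 2 ^ 9 :=
    rpow_le_sqrt_div_two_pow hqR (by norm_num) (by norm_num)
  have hL := nat_log_two_le_mul_rpow hq
  have h6 : Nat.log 2 q * (q : ℝ) ^ ((1 : ℝ) / 6) ≤ 30 / 1024 * √q :=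
    calc Nat.log 2 q * (q : ℝ) ^ ((1 : ℝ) / 6)
        ≤ 30 / 1024 * (q : ℝ) ^ ((1 : ℝ) / 3) * (q : ℝ) ^ ((1 : ℝ) / 6) := by gcongr
      _ = 30 / 1024 * √q := by
        rw [mul_assoc, ← Real.rpow_add hq0, Real.sqrt_eq_rpow]
        norm_num
  calc Sfun q ≤ Real.log 4 *
        (∑ α ∈ Icc 2 (Nat.log 2 q + 1), (q : ℝ) ^ ((1 : ℝ) / α) + Nat.log 2 q) :=
        Sfun_le_log_four_mul_sum q
    _ ≤ Real.log 4 * (1.072 * √q) := by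
        gcongr
        linarith [Real.sqrt_nonneg (q : ℝ)]
    _ = 1.072 * Real.log 4 * √q := by ring

theorem Sfun_lt_of_two_pow_le {q p : ℕ} (hq : 2 ^ 30 ≤ q) (hqp : q ≤ 2 * p) :
    Sfun q < 2.13 * √p := by
  have hp0 : 0 < √(p : ℝ) := Real.sqrt_pos.2 (mod_cast (by omega : 0 < p))
  have hsqrt2 : √2 < 1.41422 := (Real.sqrt_lt' (by norm_num)).2 (by norm_num)
  have hqp' : (q : ℝ) ≤ 2 * p := mod_cast hqp
  calc Sfun q ≤ 1.072 * Real.log 4 * √q := Sfun_le_mul_sqrt hq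
    _ ≤ 1.072 * 1.3863 * √(2 * p) := by
      gcongr
      exact log_four_lt.le
    _ = 1.072 * 1.3863 * √2 * √p := by rw [Real.sqrt_mul zero_le_two, mul_assoc _ √2]
    _ ≤ 1.072 * 1.3863 * 1.41422 * √p := by gcongr
    _ < 2.13 * √p := by
      gcongr
      norm_num

/-- An upper bound for `n#` that the kernel can evaluate for every `n`: the primorial itself for
small `n`, the Chebyshev bound `4 ^ n` beyond. -/
def primorialBound (n : ℕ) : ℕ := if n ≤ 300 then primorial n else 4 ^ n

theorem primorial_le_primorialBound (n : ℕ) : primorial n ≤ primorialBound n := by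
  unfold primorialBound
  split_ifs
  exacts [le_rfl, primorial_le_four_pow n]

/-- A computable upper bound for `exp (S(q))`. -/
def expSfunBound (q : ℕ) : ℕ :=
  ∏ α ∈ Icc 2 (Nat.log 2 q + 1), primorialBound (Nat.nthRoot α q + 1)

theorem Sfun_le_log_expSfunBound (q : ℕ) : Sfun q ≤ Real.log (expSfunBound q) := by
  rw [Sfun_eq_log_prod_primorial]
  refine Real.log_le_log (Nat.cast_pos.2 (prod_pos fun _ _ ↦ primorial_pos _)) ?_
  exact_mod_cast prod_le_prod' fun _ _ ↦ primorial_le_primorialBound _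

-- `236 / 25` is `(2.13 / log 2) ^ 2 = 9.443…` rounded down.
theorem log_lt_mul_sqrt_of_pow_le_two_pow {N D t a : ℕ} (ha : 0 < a) (hD : 0 < D)
    (hN : N ^ D ≤ 2 ^ t) (ht : t ^ 2 ≤ 236 * D ^ 2 * a / 25) :
    Real.log N < 2.13 * √a := by
  have ha' : (0 : ℝ) < a := Nat.cast_pos.2 ha
  have hD' : (0 : ℝ) < D := Nat.cast_pos.2 hD
  have hlog : D * Real.log N ≤ t * Real.log 2 := by
    rcases N.eq_zero_or_pos with rfl | hN0
    · simpa using mul_nonneg t.cast_nonneg (Real.log_nonneg one_le_two)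
    rw [← Real.log_pow, ← Real.log_pow]
    exact Real.log_le_log (by positivity) (mod_cast hN)
  have ht' : (t : ℝ) ^ 2 ≤ 9.44 * (D ^ 2 * a) := by
    have hnat : 25 * t ^ 2 ≤ 236 * D ^ 2 * a := by omega
    have hreal : 25 * (t : ℝ) ^ 2 ≤ 236 * D ^ 2 * a := mod_cast hnat
    linarith
  have hsq : (t * Real.log 2) ^ 2 < (D * (2.13 * √a)) ^ 2 :=
    calc (t * Real.log 2) ^ 2 = t ^ 2 * Real.log 2 ^ 2 := mul_pow _ _ _
      _ ≤ 9.44 * (D ^ 2 * a) * 0.6931471808 ^ 2 := by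
        gcongr
        exact Real.log_two_lt_d9.le
      _ < 2.13 ^ 2 * (D ^ 2 * a) := by
        have hDa : 0 < (D : ℝ) ^ 2 * a := by positivity
        linarith
      _ = (D * (2.13 * √a)) ^ 2 := by
        rw [mul_pow, mul_pow, Real.sq_sqrt ha'.le]
        ring
  exact lt_of_mul_lt_mul_left
    (hlog.trans_lt (lt_of_pow_lt_pow_left₀ 2 (by positivity) hsq)) hD'.le

/-- An integer inequality that certifies `S(b) < 2.13 √a`. The exponent 13 makes the rounding in
`Nat.sqrt` fine enough for the tightest gap, `a = 13` and `b = 31`. -/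
def IsShortGap (a b : ℕ) : Prop :=
  expSfunBound b ^ 13 ≤ 2 ^ Nat.sqrt (236 * 13 ^ 2 * a / 25)

instance : DecidableRel IsShortGap := fun _ _ ↦ Nat.decLe _ _

theorem IsShortGap.Sfun_lt {a b : ℕ} (h : IsShortGap a b) (ha : 0 < a) :
    Sfun b < 2.13 * √a :=
  (Sfun_le_log_expSfunBound b).trans_lt
    (log_lt_mul_sqrt_of_pow_le_two_pow ha (by norm_num) h (Nat.sqrt_le' _))

theorem exists_rel_of_isChain_of_lt_of_le {α : Type*} [LinearOrder α] {R : α → α → Prop}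
    {a b x : α} {l : List α} (h : (a :: l).IsChain R) (hax : a < x) (hb : b ∈ l) (hxb : x ≤ b) :
    ∃ y ∈ a :: l, ∃ z, R y z ∧ y < x ∧ x ≤ z := by
  induction l generalizing a with
  | nil => simp at hb
  | cons c l ih =>
    obtain ⟨hac, hl⟩ := List.isChain_cons_cons.1 h
    rcases le_or_gt x c with hxc | hcx
    · exact ⟨a, List.mem_cons_self, c, hac, hax, hxc⟩
    · have hbl : b ∈ l := (List.mem_cons.1 hb).resolve_left (hcx.trans_le hxb).ne'
      obtain ⟨y, hy, hyz⟩ := ih hl hcx hbl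
      exact ⟨y, List.mem_cons_of_mem a hy, hyz⟩

/-- Primes from 2 to just past `2 ^ 30`, chosen greedily: each but the last is as large as
`IsShortGap` allows. -/
def primeChain : List ℕ :=
  [2, 7, 13, 31, 61, 97, 139, 251, 479, 997, 2039, 4889, 11657, 32749, 89989, 152093, 266239,
   483017, 912007, 1760923, 3481937, 7077883, 14661221, 29790983, 61732409, 130165261,
   278789801, 605012407, 1073741827]

set_option maxRecDepth 100000 in
theorem prime_of_mem_primeChain : ∀ a ∈ primeChain, a.Prime := by
  simp only [primeChain, List.forall_mem_cons]
  norm_num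

set_option maxRecDepth 100000 in
set_option exponentiation.threshold 10000000 in
theorem isChain_primeChain : primeChain.IsChain IsShortGap := by
  decide +kernel

theorem stmt18_general {q p : ℕ} (hq : 2 < q) (hmax : ∀ r : ℕ, r.Prime → r < q → r ≤ p) :
    Sfun q < 2.13 * √p := by
  rcases le_or_gt (2 ^ 30) q with hlarge | hsmall
  · have hp2 : 2 ≤ p := hmax 2 Nat.prime_two hq
    obtain ⟨r, hr, hpr, hr2p⟩ := Nat.exists_prime_lt_and_le_two_mul p (by omega)
    have hqr : q ≤ r := not_lt.1 fun hrq ↦ (hmax r hr hrq).not_gt hpr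
    exact Sfun_lt_of_two_pow_le hlarge (hqr.trans hr2p)
  · obtain ⟨a, ha, b, hab, haq, hqb⟩ := exists_rel_of_isChain_of_lt_of_le
      isChain_primeChain hq (b := 2 ^ 30 + 3) (by simp) (by omega)
    have ha_prime : a.Prime := prime_of_mem_primeChain a ha
    calc Sfun q ≤ Sfun b := Sfun_mono hqb
      _ < 2.13 * √a := hab.Sfun_lt ha_prime.pos
      _ ≤ 2.13 * √p := by
        gcongr
        exact hmax a ha_prime haq

/-- If q ≥ 3 is prime and p is the prime immediately preceding q, then S(q) < 2.13·√p. -/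
theorem stmt18 (q : ℕ) (hq : q.Prime) (hq3 : 3 ≤ q) (p : ℕ) (hp : p.Prime)
    (hpq : p < q) (hmax : ∀ r : ℕ, r.Prime → r < q → r ≤ p) :
    Sfun q < 2.13 * Real.sqrt p := stmt18_general hq3 hmax
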